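/- arXiv:2404.02493 — 2 statements merged into one kernel-verified Lean document; each statement's English description precedes it below -/
import Mathlib

section
/- Let N be odd, m = (N−1)/2, and 1 ≤ j ≤ m. Then the linear interpolation (prolongation) of the coarse-grid sine mode v_j^H is I_H^h v_j^H = cos²(jπh/2)·v_j − sin²(jπh/2)·v_{N+1−j}, where I_H^h = 2·(I_h^H)ᵀ; explicitly, (I_H^h w)_{2i} = w_i and (I_H^h w)_{2i±1} = (w_i + w_{i±1})/2 with the conventions w_0 = w_{m+1} = 0. -/
open Real


open Real

/-- Mesh size `h = 1/(N+1)` for `N = 2m+1` interior fine-grid points. -/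
noncomputable def meshH (m : ℕ) : ℝ := 1 / (2 * m + 2)

/-- The full-weighting restriction operator `I_h^H : ℝ^N → ℝ^m`, `N = 2m+1`:
`(I_h^H u)_i = (u_{2i-1} + 2u_{2i} + u_{2i+1})/4` for `i = 1, …, m` (1-based indices;
the `Fin` element with value `t` represents the 1-based index `t+1`). -/
noncomputable def fullWeighting (m : ℕ) (u : Fin (2 * m + 1) → ℝ) : Fin m → ℝ :=
  fun i =>
    (u ⟨2 * i.1, by omega⟩ + 2 * u ⟨2 * i.1 + 1, by omega⟩ + u ⟨2 * i.1 + 2, by omega⟩) / 4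

/-- The fine-grid sine mode `v_j` with entries `(v_j)_i = sin(i j π h)`, `i = 1, …, N`. -/
noncomputable def fineSine (m : ℕ) (j : ℕ) : Fin (2 * m + 1) → ℝ :=
  fun i => Real.sin ((i.1 + 1) * j * π * meshH m)

/-- The coarse-grid sine mode `v_j^H` with entries `(v_j^H)_i = sin(2 i j π h)`,
`i = 1, …, m`. -/
noncomputable def coarseSine (m : ℕ) (j : ℕ) : Fin m → ℝ :=
  fun i => Real.sin (2 * (i.1 + 1) * j * π * meshH m)


/-- The linear-interpolation prolongation operator `I_H^h : ℝ^m → ℝ^N`, `N = 2m+1`: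
`(I_H^h w)_{2i} = w_i` and `(I_H^h w)_{2i±1} = (w_i + w_{i±1})/2` (1-based indices),
with the conventions `w_0 = w_{m+1} = 0`. -/
noncomputable def prolong (m : ℕ) (w : Fin m → ℝ) : Fin (2 * m + 1) → ℝ :=
  fun i =>
    let we : ℕ → ℝ := fun t => if h : 1 ≤ t ∧ t ≤ m then w ⟨t - 1, by omega⟩ else 0
    if (i.1 + 1) % 2 = 0 then we ((i.1 + 1) / 2)
    else (we (i.1 / 2) + we (i.1 / 2 + 1)) / 2

lemma aux_sum (a b : ℕ → ℝ) (ha : a 0 = 0) (m : ℕ) :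
    ∑ i ∈ Finset.range (2 * m + 1),
      (if (i + 1) % 2 = 0 then a ((i + 1) / 2) else (a (i / 2) + a (i / 2 + 1)) / 2) * b i =
    2 * ∑ i ∈ Finset.range m, a (i + 1) * ((b (2 * i) + 2 * b (2 * i + 1) + b (2 * i + 2)) / 4)
      + a (m + 1) * b (2 * m) / 2 := by
  induction m with
  | zero => simp [ha]; ring
  | succ m ih =>
    rw [show 2 * (m + 1) + 1 = (2 * m + 1) + 1 + 1 by ring, Finset.sum_range_succ,
      Finset.sum_range_succ, ih, Finset.sum_range_succ]
    rw [if_pos (by omega), if_neg (by omega)]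
    rw [show (2 * m + 1 + 1) / 2 = m + 1 by omega, show 2 * (m + 1) = 2 * m + 1 + 1 by ring]
    ring

lemma aux_coarse (m j : ℕ) (t : ℕ) (ht : t ≤ m + 1) :
    (if h : 1 ≤ t ∧ t ≤ m then coarseSine m j ⟨t - 1, by omega⟩ else 0) =
      Real.sin (2 * t * (j * π * meshH m)) := by
  split_ifs with h
  · obtain ⟨s, rfl⟩ : ∃ s, t = s + 1 := ⟨t - 1, by omega⟩
    simp only [coarseSine]
    congr 1
    simp
    ring
  · rcases Nat.eq_zero_or_pos t with rfl | h0
    · simp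
    · have : t = m + 1 := by omega
      subst this
      symm
      rw [← Real.sin_nat_mul_pi j]
      congr 1
      have : (2 * (m : ℝ) + 2) ≠ 0 := by positivity
      simp only [meshH]
      push_cast
      field_simp

lemma aux_fine (m j : ℕ) (hj : j ≤ 2 * m + 2) (i : Fin (2 * m + 1)) :
    fineSine m (2 * m + 2 - j) i =
      - ((-1) ^ (i.1 + 1) * Real.sin ((i.1 + 1) * (j * π * meshH m))) := by
  rw [← Real.sin_nat_mul_pi_sub]
  simp only [fineSine]
  congr 1
  have : (2 * (m : ℝ) + 2) ≠ 0 := by positivity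
  rw [Nat.cast_sub hj]
  simp only [meshH]
  push_cast
  field_simp

/-- Let `N = 2m+1` be odd and `1 ≤ j ≤ m`.  The prolongation `I_H^h` satisfies
`I_H^h = 2·(I_h^H)ᵀ` (as bilinear forms), and the linear interpolation of the
coarse-grid sine mode `v_j^H` is
`I_H^h v_j^H = cos²(jπh/2)·v_j − sin²(jπh/2)·v_{N+1−j}`. -/
theorem stmt18 (m : ℕ) (hm : 0 < m) (j : ℕ) (hj1 : 1 ≤ j) (hjm : j ≤ m) :
    (∀ (w : Fin m → ℝ) (u : Fin (2 * m + 1) → ℝ),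
      ∑ i : Fin (2 * m + 1), prolong m w i * u i =
        2 * ∑ i : Fin m, w i * fullWeighting m u i) ∧
    prolong m (coarseSine m j) =
      Real.cos (j * π * meshH m / 2) ^ 2 • fineSine m j -
        Real.sin (j * π * meshH m / 2) ^ 2 • fineSine m (2 * m + 2 - j) := by
  constructor
  · intro w u
    let a : ℕ → ℝ := fun t => if h : 1 ≤ t ∧ t ≤ m then w ⟨t - 1, by omega⟩ else 0
    let b : ℕ → ℝ := fun t => if h : t < 2 * m + 1 then u ⟨t, h⟩ else 0
    have key := aux_sum a b (by simp [a]) m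
    have ham : a (m + 1) = 0 := by simp [a]
    rw [ham, zero_mul, zero_div, add_zero, ← Fin.sum_univ_eq_sum_range, 
      ← Fin.sum_univ_eq_sum_range (fun i => a (i + 1) *
        ((b (2 * i) + 2 * b (2 * i + 1) + b (2 * i + 2)) / 4))] at key
    convert key using 1
    · refine Finset.sum_congr rfl fun i _ => ?_
      have hb : b i.1 = u i := dif_pos i.2
      rw [hb]
      rfl
    · congr 1
      refine Finset.sum_congr rfl fun i _ => ?_
      have hi := i.2
      have h1 : a (i.1 + 1) = w i := by
        simp only [a]
        rw [dif_pos (by omega)]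
        rfl
      have hb : ∀ t (ht : t < 2 * m + 1), b t = u ⟨t, ht⟩ := fun t ht => dif_pos ht
      rw [h1, hb _ (by omega), hb _ (by omega), hb _ (by omega)]
      rfl
  · funext i
    have hi := i.2
    simp only [Pi.sub_apply, Pi.smul_apply, smul_eq_mul]
    rw [aux_fine m j (by omega) i]
    have hf : fineSine m j i = Real.sin ((i.1 + 1) * (j * π * meshH m)) := by
      simp only [fineSine]
      congr 1
      ring
    rw [hf]
    simp only [prolong]
    rw [aux_coarse m j _ (by omega), aux_coarse m j _ (by omega), aux_coarse m j _ (by omega)]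
    rw [mul_div_assoc (j * π : ℝ)]
    generalize hθ : (j * π * meshH m : ℝ) = θ
    have hθ2 : (j * π * (meshH m / 2) : ℝ) = θ / 2 := by rw [← hθ]; ring
    rw [hθ2]
    have hcs := Real.sin_sq_add_cos_sq (θ / 2)
    rcases Nat.even_or_odd' i.1 with ⟨k, hk | hk⟩
    · rw [hk, if_neg (by omega), show 2 * k / 2 = k by omega, Odd.neg_one_pow ⟨k, rfl⟩]
      have hc : Real.cos θ = Real.cos (θ / 2) ^ 2 - Real.sin (θ / 2) ^ 2 := by
        rw [← Real.cos_two_mul']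
        congr 1
        ring
      push_cast
      have e1 : 2 * (k : ℝ) * θ = (2 * k + 1) * θ - θ := by ring
      have e2 : 2 * ((k : ℝ) + 1) * θ = (2 * k + 1) * θ + θ := by ring
      rw [e1, e2, Real.sin_sub, Real.sin_add, hc]
      ring
    · rw [hk, if_pos (by omega), show (2 * k + 1 + 1) / 2 = k + 1 by omega,
        Even.neg_one_pow ⟨k + 1, by ring⟩]
      push_cast
      have e1 : (2 * (k : ℝ) + 1 + 1) * θ = 2 * (k + 1) * θ := by ring
      rw [e1]
      linear_combination (-Real.sin (2 * (k + 1) * θ)) * hcs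
end

section
/- Let N be odd, m = (N−1)/2, and 1 ≤ j ≤ m, and assume the coarse-grid matrix A^H is invertible. Then the two-grid coarse-grid-correction error-propagation operator E = I − I_H^h (A^H)⁻¹ I_h^H A^h acts on the fine-grid eigenvector v_j exactly as E v_j = (1 − (λ_j^h/λ_j^H)·cos⁴(jπh/2))·v_j + (λ_j^h/λ_j^H)·cos²(jπh/2)·sin²(jπh/2)·v_{N+1−j}, where λ_j^h = (4/h²)sin²(jπh/2) − k² and λ_j^H = (1/h²)sin²(jπh) − k². In particular, for low-frequency modes where I_H^h I_h^H v_j ≈ v_j, the coarse-grid correction compresses v_j by approximately the factor 1 − λ_j^h/λ_j^H. -/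
open Real Matrix

/-- The `n × n` finite-difference Helmholtz matrix with mesh size `e`: diagonal entries
`2/e² - k²`, subdiagonal and superdiagonal entries `-1/e²`, zero elsewhere. -/
noncomputable def helmholtzMat (n : ℕ) (e k : ℝ) : Matrix (Fin n) (Fin n) ℝ :=
  Matrix.of fun i j =>
    if i = j then 2 / e ^ 2 - k ^ 2
    else if i.1 + 1 = j.1 ∨ j.1 + 1 = i.1 then -(1 / e ^ 2)
    else 0

/-- The full-weighting restriction `I_h^H : ℝ^N → ℝ^m` as an `m × N` matrix,
`(I_h^H u)_i = (u_{2i-1} + 2u_{2i} + u_{2i+1})/4`. -/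
noncomputable def restrictMat (m : ℕ) : Matrix (Fin m) (Fin (2 * m + 1)) ℝ :=
  Matrix.of fun i p =>
    if p.1 = 2 * i.1 then 1 / 4
    else if p.1 = 2 * i.1 + 1 then 1 / 2
    else if p.1 = 2 * i.1 + 2 then 1 / 4
    else 0

/-- The prolongation `I_H^h = 2·(I_h^H)ᵀ` as an `N × m` matrix. -/
noncomputable def prolongMat (m : ℕ) : Matrix (Fin (2 * m + 1)) (Fin m) ℝ :=
  (2 : ℝ) • (restrictMat m)ᵀ

/-- The fine-grid eigenvalue `λ_j^h = (4/h²)·sin²(jπh/2) − k²`. -/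
noncomputable def lamFine (m : ℕ) (k : ℝ) (j : ℕ) : ℝ :=
  4 / (meshH m) ^ 2 * Real.sin (j * π * meshH m / 2) ^ 2 - k ^ 2

/-- The coarse-grid eigenvalue `λ_j^H = (1/h²)·sin²(jπh) − k²`. -/
noncomputable def lamCoarse (m : ℕ) (k : ℝ) (j : ℕ) : ℝ :=
  1 / (meshH m) ^ 2 * Real.sin (j * π * meshH m) ^ 2 - k ^ 2

theorem helm_apply (n : ℕ) (e k : ℝ) (g : ℕ → ℝ) (h0 : g 0 = 0) (hn : g (n + 1) = 0) (i : Fin n) :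
    (helmholtzMat n e k).mulVec (fun p => g (p.1 + 1)) i =
      (2 / e ^ 2 - k ^ 2) * g (i.1 + 1) - 1 / e ^ 2 * (g i.1 + g (i.1 + 2)) := by
  have hi := i.2
  have key : ∀ p : Fin n, helmholtzMat n e k i p * g (p.1 + 1) =
      (if i.1 = p.1 then (2 / e ^ 2 - k ^ 2) * g (p.1 + 1) else 0) +
      (if i.1 + 1 = p.1 then -(1 / e ^ 2) * g (p.1 + 1) else 0) +
      (if i.1 = p.1 + 1 then -(1 / e ^ 2) * g (p.1 + 1) else 0) := by
    intro p
    simp only [helmholtzMat, Matrix.of_apply, Fin.ext_iff]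
    split_ifs <;> first | omega | ring
  simp only [Matrix.mulVec, dotProduct]
  rw [Finset.sum_congr rfl (fun p _ => key p), Fin.sum_univ_eq_sum_range (fun p =>
      (if i.1 = p then (2 / e ^ 2 - k ^ 2) * g (p + 1) else 0) +
      (if i.1 + 1 = p then -(1 / e ^ 2) * g (p + 1) else 0) +
      (if i.1 = p + 1 then -(1 / e ^ 2) * g (p + 1) else 0)) n,
    Finset.sum_add_distrib, Finset.sum_add_distrib, Finset.sum_ite_eq, Finset.sum_ite_eq]
  have h3 : ∑ p ∈ Finset.range n, (if i.1 = p + 1 then -(1 / e ^ 2) * g (p + 1) else 0) =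
      -(1 / e ^ 2) * g i.1 := by
    rcases Nat.eq_zero_or_pos i.1 with h | h
    · rw [h, h0]; simp
    · obtain ⟨l, hl⟩ := Nat.exists_eq_succ_of_ne_zero h.ne'
      rw [hl]
      simp only [Nat.succ_eq_add_one, Nat.add_right_cancel_iff]
      rw [Finset.sum_ite_eq, if_pos (Finset.mem_range.2 (by omega))]
  rw [h3, if_pos (Finset.mem_range.2 hi)]
  split_ifs with h
  · ring
  · have : i.1 + 2 = n + 1 := by rw [Finset.mem_range] at h; omega
    rw [this, hn]; ring

theorem restrict_apply (m : ℕ) (f : ℕ → ℝ) (i : Fin m) :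
    (restrictMat m).mulVec (fun p => f p.1) i =
      1 / 4 * f (2 * i.1) + 1 / 2 * f (2 * i.1 + 1) + 1 / 4 * f (2 * i.1 + 2) := by
  have hi := i.2
  have key : ∀ p : Fin (2 * m + 1), restrictMat m i p * f p.1 =
      (if 2 * i.1 = p.1 then 1 / 4 * f p.1 else 0) +
      (if 2 * i.1 + 1 = p.1 then 1 / 2 * f p.1 else 0) +
      (if 2 * i.1 + 2 = p.1 then 1 / 4 * f p.1 else 0) := by
    intro p
    simp only [restrictMat, Matrix.of_apply]
    split_ifs <;> first | omega | ring
  simp only [Matrix.mulVec, dotProduct]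
  rw [Finset.sum_congr rfl (fun p _ => key p), Fin.sum_univ_eq_sum_range (fun p =>
      (if 2 * i.1 = p then 1 / 4 * f p else 0) +
      (if 2 * i.1 + 1 = p then 1 / 2 * f p else 0) +
      (if 2 * i.1 + 2 = p then 1 / 4 * f p else 0)) (2 * m + 1),
    Finset.sum_add_distrib, Finset.sum_add_distrib, Finset.sum_ite_eq, Finset.sum_ite_eq,
    Finset.sum_ite_eq, if_pos (Finset.mem_range.2 (by omega)),
    if_pos (Finset.mem_range.2 (by omega)), if_pos (Finset.mem_range.2 (by omega))]

theorem prolong_odd (m : ℕ) (g : ℕ → ℝ) (p : Fin (2 * m + 1)) (l : ℕ) (hl : p.1 = 2 * l + 1) :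
    (prolongMat m).mulVec (fun i => g (i.1 + 1)) p = g (l + 1) := by
  have hp := p.2
  have key : ∀ i : Fin m, prolongMat m p i * g (i.1 + 1) =
      (if l = i.1 then g (i.1 + 1) else 0) := by
    intro i
    simp only [prolongMat, restrictMat, Matrix.smul_apply, Matrix.transpose_apply, Matrix.of_apply,
      smul_eq_mul]
    split_ifs <;> first | omega | ring
  simp only [Matrix.mulVec, dotProduct]
  rw [Finset.sum_congr rfl (fun p _ => key p), Fin.sum_univ_eq_sum_range (fun i =>
      (if l = i then g (i + 1) else 0)) m, Finset.sum_ite_eq,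
      if_pos (Finset.mem_range.2 (by omega))]

theorem prolong_even (m : ℕ) (g : ℕ → ℝ) (h0 : g 0 = 0) (hm : g (m + 1) = 0)
    (p : Fin (2 * m + 1)) (l : ℕ) (hl : p.1 = 2 * l) :
    (prolongMat m).mulVec (fun i => g (i.1 + 1)) p = 1 / 2 * g l + 1 / 2 * g (l + 1) := by
  have hp := p.2
  have key : ∀ i : Fin m, prolongMat m p i * g (i.1 + 1) =
      (if l = i.1 then 1 / 2 * g (i.1 + 1) else 0) +
      (if l = i.1 + 1 then 1 / 2 * g (i.1 + 1) else 0) := by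
    intro i
    simp only [prolongMat, restrictMat, Matrix.smul_apply, Matrix.transpose_apply, Matrix.of_apply,
      smul_eq_mul]
    split_ifs <;> first | omega | ring
  simp only [Matrix.mulVec, dotProduct]
  rw [Finset.sum_congr rfl (fun p _ => key p), Fin.sum_univ_eq_sum_range (fun i =>
      (if l = i then 1 / 2 * g (i + 1) else 0) +
      (if l = i + 1 then 1 / 2 * g (i + 1) else 0)) m, Finset.sum_add_distrib, Finset.sum_ite_eq]
  have h3 : ∑ p ∈ Finset.range m, (if l = p + 1 then 1 / 2 * g (p + 1) else 0) =
      1 / 2 * g l := by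
    rcases Nat.eq_zero_or_pos l with h | h
    · rw [h, h0]; simp
    · obtain ⟨q, rfl⟩ := Nat.exists_eq_succ_of_ne_zero h.ne'
      simp only [Nat.succ_eq_add_one, Nat.add_right_cancel_iff]
      rw [Finset.sum_ite_eq, if_pos (Finset.mem_range.2 (by omega))]
  rw [h3]
  split_ifs with h
  · ring
  · have : l = m := by rw [Finset.mem_range] at h; omega
    rw [this, hm]; ring

theorem sin_three (x t : ℝ) : Real.sin (x - t) + Real.sin (x + t) =
    2 * Real.cos t * Real.sin x := by
  rw [Real.sin_sub, Real.sin_add]; ring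

/-- Let `N = 2m+1` be odd, `1 ≤ j ≤ m`, and assume the re-discretized coarse-grid
matrix `A^H` (mesh size `H = 2h`) is invertible.  Then the two-grid
coarse-grid-correction error-propagation operator
`E = I - I_H^h (A^H)⁻¹ I_h^H A^h` acts on the fine-grid eigenvector `v_j` exactly as
`E v_j = (1 - (λ_j^h/λ_j^H)·cos⁴(jπh/2))·v_j
        + (λ_j^h/λ_j^H)·cos²(jπh/2)·sin²(jπh/2)·v_{N+1−j}`. -/
theorem stmt19 (m : ℕ) (hm : 0 < m) (k : ℝ) (j : ℕ) (hj1 : 1 ≤ j) (hjm : j ≤ m)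
    (hAH : IsUnit (helmholtzMat m (2 * meshH m) k).det) :
    ((1 : Matrix (Fin (2 * m + 1)) (Fin (2 * m + 1)) ℝ) -
        prolongMat m * (helmholtzMat m (2 * meshH m) k)⁻¹ * restrictMat m *
          helmholtzMat (2 * m + 1) (meshH m) k).mulVec (fineSine m j) =
      (1 - lamFine m k j / lamCoarse m k j * Real.cos (j * π * meshH m / 2) ^ 4) •
          fineSine m j +
        (lamFine m k j / lamCoarse m k j * Real.cos (j * π * meshH m / 2) ^ 2 *
            Real.sin (j * π * meshH m / 2) ^ 2) •
          fineSine m (2 * m + 2 - j) := by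
  have hM : (2 * (m : ℝ) + 2) ≠ 0 := by positivity
  have hMp : (0 : ℝ) < 2 * (m : ℝ) + 2 := by positivity
  have hh : meshH m * (2 * m + 2) = 1 := by unfold meshH; field_simp
  have hhp : 0 < meshH m := by unfold meshH; positivity
  obtain ⟨t, ht⟩ : ∃ t : ℝ, t = j * π * meshH m := ⟨_, rfl⟩
  have htM : t * (2 * m + 2) = j * π := by rw [ht]; linear_combination (j * π) * hh
  have hc : Real.cos t = 2 * Real.cos (t / 2) ^ 2 - 1 := by
    rw [← Real.cos_two_mul]; ring_nf
  have hcs : Real.sin (t / 2) ^ 2 = 1 - Real.cos (t / 2) ^ 2 := Real.sin_sq _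
  have hcs' : Real.sin t ^ 2 = 1 - Real.cos t ^ 2 := Real.sin_sq _
  have hlF : lamFine m k j = 2 / meshH m ^ 2 * (1 - Real.cos t) - k ^ 2 := by
    unfold lamFine; rw [← ht, hcs, hc]; ring
  have hlC : lamCoarse m k j = 1 / meshH m ^ 2 * Real.sin t ^ 2 - k ^ 2 := by
    unfold lamCoarse; rw [← ht]
  have hv : fineSine m j = fun p => Real.sin (((p.1 + 1 : ℕ) : ℝ) * t) := by
    funext p; unfold fineSine; rw [ht]; push_cast; ring_nf
  -- fine eigenvector
  have hA : (helmholtzMat (2 * m + 1) (meshH m) k).mulVec (fineSine m j) =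
      lamFine m k j • fineSine m j := by
    rw [hv]
    funext i
    rw [helm_apply (2 * m + 1) (meshH m) k (fun x : ℕ => Real.sin ((x : ℝ) * t)) (by simp)
      (by push_cast
          rw [show (2 * (m : ℝ) + 1 + 1) * t = j * π by linear_combination htM]
          exact Real.sin_nat_mul_pi j), hlF]
    have := sin_three (((i.1 + 1 : ℕ) : ℝ) * t) t
    simp only [Pi.smul_apply, smul_eq_mul]
    rw [show ((i.1 : ℕ) : ℝ) * t = ((i.1 + 1 : ℕ) : ℝ) * t - t by push_cast; ring,
      show ((i.1 + 2 : ℕ) : ℝ) * t = ((i.1 + 1 : ℕ) : ℝ) * t + t by push_cast; ring, this]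
    ring
  -- coarse vector
  obtain ⟨w, hw⟩ : ∃ w : Fin m → ℝ, w = fun p => Real.sin (((p.1 + 1 : ℕ) : ℝ) * (2 * t)) := ⟨_, rfl⟩
  have hgm : Real.sin (((m + 1 : ℕ) : ℝ) * (2 * t)) = 0 := by
    push_cast
    rw [show ((m : ℝ) + 1) * (2 * t) = j * π by linear_combination htM]
    exact Real.sin_nat_mul_pi j
  have hB : (helmholtzMat m (2 * meshH m) k).mulVec w = lamCoarse m k j • w := by
    rw [hw]
    funext i
    rw [helm_apply m (2 * meshH m) k (fun x : ℕ => Real.sin ((x : ℝ) * (2 * t))) (by simp) hgm,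
      hlC]
    have := sin_three (((i.1 + 1 : ℕ) : ℝ) * (2 * t)) (2 * t)
    simp only [Pi.smul_apply, smul_eq_mul]
    rw [show ((i.1 : ℕ) : ℝ) * (2 * t) = ((i.1 + 1 : ℕ) : ℝ) * (2 * t) - 2 * t by push_cast; ring,
      show ((i.1 + 2 : ℕ) : ℝ) * (2 * t) = ((i.1 + 1 : ℕ) : ℝ) * (2 * t) + 2 * t by
        push_cast; ring, this, Real.cos_two_mul, hcs']
    field_simp
    ring
  have hR : (restrictMat m).mulVec (fineSine m j) = Real.cos (t / 2) ^ 2 • w := by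
    rw [hv, hw]
    funext i
    rw [restrict_apply m (fun x : ℕ => Real.sin (((x + 1 : ℕ) : ℝ) * t))]
    have := sin_three (((i.1 + 1 : ℕ) : ℝ) * (2 * t)) t
    simp only [Pi.smul_apply, smul_eq_mul]
    rw [show ((2 * i.1 + 1 : ℕ) : ℝ) * t = ((i.1 + 1 : ℕ) : ℝ) * (2 * t) - t by push_cast; ring,
      show ((2 * i.1 + 1 + 1 : ℕ) : ℝ) * t = ((i.1 + 1 : ℕ) : ℝ) * (2 * t) by push_cast; ring,
      show ((2 * i.1 + 2 + 1 : ℕ) : ℝ) * t = ((i.1 + 1 : ℕ) : ℝ) * (2 * t) + t by push_cast; ring]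
    rw [hc] at this
    linear_combination this / 4
  have hv' : ∀ p : Fin (2 * m + 1), fineSine m (2 * m + 2 - j) p =
      (-1) ^ p.1 * Real.sin (((p.1 + 1 : ℕ) : ℝ) * t) := by
    intro p
    unfold fineSine
    rw [Nat.cast_sub (by omega)]
    push_cast
    rw [show ((p.1 : ℝ) + 1) * (2 * m + 2 - j) * π * meshH m =
      ((p.1 + 1 : ℕ) : ℝ) * π - ((p.1 : ℝ) + 1) * t by
        rw [ht]; push_cast; linear_combination ((p.1 : ℝ) + 1) * π * hh]
    rw [Real.sin_sub, Real.sin_nat_mul_pi, Real.cos_nat_mul_pi]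
    ring
  have hP : (prolongMat m).mulVec w = Real.cos (t / 2) ^ 2 • fineSine m j -
      Real.sin (t / 2) ^ 2 • fineSine m (2 * m + 2 - j) := by
    funext p
    simp only [Pi.sub_apply, Pi.smul_apply, smul_eq_mul]
    rw [hv', hv, hw]
    rcases Nat.even_or_odd' p.1 with ⟨l, hl | hl⟩
    · rw [prolong_even m (fun x : ℕ => Real.sin ((x : ℝ) * (2 * t))) (by simp) hgm p l hl]
      simp only [hl]
      have := sin_three (((2 * l + 1 : ℕ) : ℝ) * t) t
      simp only [pow_mul, neg_one_sq, one_pow]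
      rw [show ((l : ℕ) : ℝ) * (2 * t) = ((2 * l + 1 : ℕ) : ℝ) * t - t by push_cast; ring,
        show ((l + 1 : ℕ) : ℝ) * (2 * t) = ((2 * l + 1 : ℕ) : ℝ) * t + t by push_cast; ring, hcs]
      rw [hc] at this
      linear_combination this / 2
    · rw [prolong_odd m (fun x : ℕ => Real.sin ((x : ℝ) * (2 * t))) p l hl]
      simp only [hl]
      simp only [pow_succ (-1 : ℝ) (2 * l), pow_mul, neg_one_sq, one_pow]
      rw [show ((l + 1 : ℕ) : ℝ) * (2 * t) = ((2 * l + 1 + 1 : ℕ) : ℝ) * t by push_cast; ring, hcs]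
      ring
  have hinv : (helmholtzMat m (2 * meshH m) k)⁻¹ * helmholtzMat m (2 * meshH m) k = 1 :=
    Matrix.nonsing_inv_mul _ hAH
  have hw' : w = lamCoarse m k j • (helmholtzMat m (2 * meshH m) k)⁻¹.mulVec w := by
    rw [← Matrix.mulVec_smul, ← hB, Matrix.mulVec_mulVec, hinv, Matrix.one_mulVec]
  have hne : lamCoarse m k j ≠ 0 := by
    intro h
    rw [h, zero_smul] at hw'
    have h1 := congrFun hw' ⟨0, hm⟩
    rw [hw] at h1
    simp only [Pi.zero_apply] at h1
    have hj0 : (0 : ℝ) < j := by exact_mod_cast hj1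
    have hjm' : (j : ℝ) ≤ m := by exact_mod_cast hjm
    have htp : 0 < t := by rw [ht]; positivity
    have htl : 2 * t < π := by
      have := Real.pi_pos
      by_contra hcon
      push Not at hcon
      nlinarith
    have := Real.sin_pos_of_pos_of_lt_pi (by positivity : 0 < 2 * t) htl
    simp at h1
    linarith
  have hAi : (helmholtzMat m (2 * meshH m) k)⁻¹.mulVec w = (lamCoarse m k j)⁻¹ • w := by
    rw [eq_inv_smul_iff₀ hne]; exact hw'.symm
  rw [← ht, Matrix.sub_mulVec, Matrix.one_mulVec, ← Matrix.mulVec_mulVec, hA, Matrix.mulVec_smul,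
    ← Matrix.mulVec_mulVec, hR, Matrix.mulVec_smul, ← Matrix.mulVec_mulVec, hAi,
    Matrix.mulVec_smul, hP]
  funext p
  simp only [Pi.sub_apply, Pi.add_apply, Pi.smul_apply, smul_eq_mul]
  ring
end
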